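/- Fix n ≥ 1 and for b ∈ {0,1} define the 2^n × 2^n density matrix ρ^{s,b} := 2^{−(n−1)} ∑_{r ∈ {0,1}^n : r₁⊕⋯⊕rₙ = b} |φ^{s,r}⟩⟨φ^{s,r}|. Then for every s ∈ {0,1}^n there exist positive semidefinite matrices M₀ and M₁ with M₀ + M₁ = I_{2^n} such that tr(M_b · ρ^{s,b'}) = 1 if b = b' and tr(M_b · ρ^{s,b'}) = 0 if b ≠ b'. (This is the attack: an adversary who learns the basis string s from a one-time-pad ciphertext and known message bits can measure her quantum system and recover the parity bit S_{n+1} = R₁ ⊕ ⋯ ⊕ Rₙ with certainty.) -/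

import Mathlib

open Matrix
open scoped ComplexOrder

/-- The qubit state `|r⟩ₛ` encoding the classical bit `r` in the standard basis (`s = false`)
or the diagonal basis (`s = true`): `|0⟩₀ = (1,0)`, `|1⟩₀ = (0,1)`, `|0⟩₁ = (1/√2)(1,1)`,
`|1⟩₁ = (1/√2)(1,−1)`. The component at index `false` is the first coordinate. -/
noncomputable def qubit (s r : Bool) : Bool → ℂ := fun t =>
  if s then (if r && t then -((1 / Real.sqrt 2 : ℝ) : ℂ) else ((1 / Real.sqrt 2 : ℝ) : ℂ))
  else (if r = t then 1 else 0)

/-- The `n`-qubit state `|φ^{s,r}⟩ = |r₁⟩_{s₁} ⊗ ⋯ ⊗ |rₙ⟩_{sₙ}`, realized as a vector on the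
index type `Fin n → Bool ≃ Fin 2ⁿ`. -/
noncomputable def phi {n : ℕ} (s r : Fin n → Bool) : (Fin n → Bool) → ℂ := fun t =>
  ∏ i, qubit (s i) (r i) (t i)

/-- The parity `r₁ ⊕ ⋯ ⊕ rₙ ∈ ZMod 2` of a bit string. -/
def parity {n : ℕ} (r : Fin n → Bool) : ZMod 2 := ∑ i, if r i then 1 else 0

/-- The density operator `ρ^{s,b} = 2^{−(n−1)} ∑_{r : r₁⊕⋯⊕rₙ = b} |φ^{s,r}⟩⟨φ^{s,r}|`. -/
noncomputable def rho (n : ℕ) (s : Fin n → Bool) (b : ZMod 2) :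
    Matrix (Fin n → Bool) (Fin n → Bool) ℂ :=
  ((2 : ℂ) ^ (n - 1))⁻¹ •
    ∑ r ∈ Finset.univ.filter (fun r : Fin n → Bool => parity r = b),
      vecMulVec (phi s r) (star (phi s r))

/-!
The states `|φ^{s,r}⟩`, `r ∈ {0,1}ⁿ`, form an orthonormal basis, being tensor products of
orthonormal bases of the single qubits. Measuring in this basis and keeping only the parity of the
outcome `r` is the POVM `M b = ∑_{parity r = b} |φ^{s,r}⟩⟨φ^{s,r}|`. Since `ρ^{s,b}` is `M b`
divided by `2^(n-1)`, and exactly `2^(n-1)` strings have parity `b`, this POVM identifies `b` with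
certainty.
-/

section RankOneSum

variable {R ι m : Type*} [Semiring R] [StarRing R]

/-- The sum of rank-one operators `∑_{i ∈ S} |vᵢ⟩⟨vᵢ|`. For an orthonormal family `v` it is the
orthogonal projection onto the span of the `vᵢ` with `i ∈ S`. -/
def rankOneSum (v : ι → m → R) (S : Finset ι) : Matrix m m R :=
  ∑ i ∈ S, vecMulVec (v i) (star (v i))

theorem posSemidef_rankOneSum {R : Type*} [Ring R] [PartialOrder R] [StarRing R]
    [StarOrderedRing R] [Finite m] (v : ι → m → R) (S : Finset ι) :
    (rankOneSum v S).PosSemidef :=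
  posSemidef_sum S fun i _ => posSemidef_vecMulVec_self_star (v i)

theorem sum_rankOneSum_fiber [Fintype ι] {β : Type*} [Fintype β] [DecidableEq β] (v : ι → m → R)
    (f : ι → β) : ∑ b, rankOneSum v {i | f i = b} = rankOneSum v Finset.univ :=
  Finset.sum_fiberwise Finset.univ f fun i => vecMulVec (v i) (star (v i))

variable [Fintype m] [DecidableEq ι] {v : ι → m → R}

theorem rankOneSum_mul_rankOneSum (hv : ∀ i j, star (v i) ⬝ᵥ v j = if i = j then 1 else 0)
    (S T : Finset ι) : rankOneSum v S * rankOneSum v T = rankOneSum v (S ∩ T) := by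
  simp only [rankOneSum, Finset.sum_mul_sum, vecMulVec_mul_vecMulVec, hv, ite_smul, one_smul,
    zero_smul]
  simp [Finset.sum_ite_mem, apply_ite]

theorem rankOneSum_univ [IsStablyFiniteRing R] [Fintype ι] [DecidableEq m]
    (hv : ∀ i j, star (v i) ⬝ᵥ v j = if i = j then 1 else 0)
    (hcard : Fintype.card m = Fintype.card ι) : rankOneSum v Finset.univ = 1 := by
  have hleft : (of v)ᵀᴴ * (of v)ᵀ = 1 := by
    ext i j
    exact (hv i j).trans one_apply.symm
  have hright : (of v)ᵀ * (of v)ᵀᴴ = 1 := (mul_eq_one_comm_of_card_eq _ _ _ hcard).2 hleft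
  rw [← hright]
  ext t t'
  simp [rankOneSum, Matrix.sum_apply, vecMulVec_apply, mul_apply]

theorem trace_rankOneSum {R : Type*} [CommSemiring R] [StarRing R] {v : ι → m → R}
    (hv : ∀ i j, star (v i) ⬝ᵥ v j = if i = j then 1 else 0) (S : Finset ι) :
    (rankOneSum v S).trace = S.card := by
  simp [rankOneSum, trace_sum, trace_vecMulVec, dotProduct_comm (v _), hv]

end RankOneSum

theorem prod_dotProduct_prod {R ι : Type*} {α : ι → Type*} [CommSemiring R] [Fintype ι]
    [DecidableEq ι] [∀ i, Fintype (α i)] (u v : ∀ i, α i → R) :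
    (fun t : ∀ i, α i => ∏ i, u i (t i)) ⬝ᵥ (fun t => ∏ i, v i (t i)) = ∏ i, u i ⬝ᵥ v i := by
  simp only [dotProduct, ← Finset.prod_mul_distrib, Fintype.prod_sum]

theorem star_qubit_dotProduct_qubit (s r r' : Bool) :
    star (qubit s r) ⬝ᵥ qubit s r' = if r = r' then 1 else 0 := by
  have h_sq : ((Real.sqrt 2 : ℝ) : ℂ)⁻¹ * ((Real.sqrt 2 : ℝ) : ℂ)⁻¹ = 1 / 2 := by
    rw [← mul_inv, ← Complex.ofReal_mul, Real.mul_self_sqrt zero_le_two, Complex.ofReal_ofNat,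
      one_div]
  cases s <;> cases r <;> cases r' <;> norm_num [dotProduct, qubit, h_sq]

theorem star_phi_dotProduct_phi {n : ℕ} (s r r' : Fin n → Bool) :
    star (phi s r) ⬝ᵥ phi s r' = if r = r' then 1 else 0 := by
  have h_star : star (phi s r) = fun t => ∏ i, star (qubit (s i) (r i)) (t i) :=
    funext fun t => star_prod _ _
  calc star (phi s r) ⬝ᵥ phi s r' = ∏ i, star (qubit (s i) (r i)) ⬝ᵥ qubit (s i) (r' i) := by
        rw [h_star]
        exact prod_dotProduct_prod _ _
    _ = if r = r' then 1 else 0 := by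
        simp only [star_qubit_dotProduct_qubit, Finset.prod_ite_zero, Finset.prod_const_one,
          Finset.mem_univ, forall_const, funext_iff]

theorem parity_cons {n : ℕ} (x : Bool) (r : Fin n → Bool) :
    parity (Fin.cons x r : Fin (n + 1) → Bool) = (if x then 1 else 0) + parity r := by
  simp only [parity, Fin.sum_univ_succ, Fin.cons_zero, Fin.cons_succ]

theorem parity_cons_eq_iff {n : ℕ} (x : Bool) (r : Fin n → Bool) (b : ZMod 2) :
    parity (Fin.cons x r : Fin (n + 1) → Bool) = b ↔ x = decide (parity r ≠ b) := by
  have h_bit : ∀ (x : Bool) (p b : ZMod 2),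
      (if x then 1 else 0) + p = b ↔ x = decide (p ≠ b) := by decide
  rw [parity_cons, h_bit]

theorem card_parity_eq (n : ℕ) (b : ZMod 2) :
    Finset.card {r : Fin (n + 1) → Bool | parity r = b} = 2 ^ n := by
  have h_tail : Finset.card {r : Fin (n + 1) → Bool | parity r = b} =
      Fintype.card (Fin n → Bool) := by
    refine Finset.card_nbij' Fin.tail (fun t => Fin.cons (decide (parity t ≠ b)) t)
      (fun _ _ => Finset.mem_univ _) (fun t _ => ?_) (fun r hr => ?_) (fun _ _ => rfl)
    · simp [parity_cons_eq_iff]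
    · have h_head : r 0 = decide (parity (Fin.tail r) ≠ b) := by
        rw [← parity_cons_eq_iff, Fin.cons_self_tail]
        simpa using hr
      simp only [← h_head, Fin.cons_self_tail]
  simpa using h_tail

/-- The measurement operators of the attack: measure in the basis `|φ^{s,r}⟩` and report the parity
of the outcome `r`. -/
noncomputable def parityMeasurement {n : ℕ} (s : Fin n → Bool) (b : ZMod 2) :
    Matrix (Fin n → Bool) (Fin n → Bool) ℂ :=
  rankOneSum (phi s) {r | parity r = b}

theorem posSemidef_parityMeasurement {n : ℕ} (s : Fin n → Bool) (b : ZMod 2) :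
    (parityMeasurement s b).PosSemidef :=
  posSemidef_rankOneSum _ _

theorem sum_parityMeasurement {n : ℕ} (s : Fin n → Bool) : ∑ b, parityMeasurement s b = 1 :=
  (sum_rankOneSum_fiber (phi s) parity).trans (rankOneSum_univ (star_phi_dotProduct_phi s) rfl)

theorem rho_eq_smul_parityMeasurement (n : ℕ) (s : Fin n → Bool) (b : ZMod 2) :
    rho n s b = ((2 : ℂ) ^ (n - 1))⁻¹ • parityMeasurement s b :=
  rfl

theorem trace_parityMeasurement_mul_parityMeasurement {n : ℕ} (s : Fin (n + 1) → Bool)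
    (b b' : ZMod 2) :
    (parityMeasurement s b * parityMeasurement s b').trace = if b = b' then 2 ^ n else 0 := by
  rw [parityMeasurement, parityMeasurement, rankOneSum_mul_rankOneSum (star_phi_dotProduct_phi s),
    trace_rankOneSum (star_phi_dotProduct_phi s), ← Finset.filter_and]
  obtain rfl | hb := eq_or_ne b b'
  · simp [card_parity_eq]
  · have h_empty : ∀ r : Fin (n + 1) → Bool, ¬(parity r = b ∧ parity r = b') :=
      fun r h => hb (h.1.symm.trans h.2)
    simp [h_empty, hb]

/-- For every `n ≥ 1` and basis string `s`, there is a two-outcome POVM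
`(M₀, M₁)` (positive semidefinite, summing to the identity) that perfectly distinguishes
`ρ^{s,0}` from `ρ^{s,1}`: `tr(M_b ρ^{s,b'}) = 1` if `b = b'` and `= 0` otherwise. -/
theorem stmt_8 (n : ℕ) (hn : 1 ≤ n) (s : Fin n → Bool) :
    ∃ M : ZMod 2 → Matrix (Fin n → Bool) (Fin n → Bool) ℂ,
      (∀ b, (M b).PosSemidef) ∧ (M 0 + M 1 = 1) ∧
      ∀ b b', (M b * rho n s b').trace = if b = b' then 1 else 0 := by
  obtain ⟨n, rfl⟩ := Nat.exists_eq_add_of_le' hn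
  have h_sum : ∑ b, parityMeasurement s b = parityMeasurement s 0 + parityMeasurement s 1 :=
    Fin.sum_univ_two _
  refine ⟨parityMeasurement s, posSemidef_parityMeasurement s,
    h_sum.symm.trans (sum_parityMeasurement s), fun b b' => ?_⟩
  rw [rho_eq_smul_parityMeasurement, Matrix.mul_smul, trace_smul,
    trace_parityMeasurement_mul_parityMeasurement]
  simp
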